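/- Let p be a prime, q = p^m, and let k = r ≥ 4 be an integer with p not dividing k. Let a_0, a_1, …, a_r ∈ F_{q^r} with a_r ≠ 0. Then the polynomial V_{r,r}(X_1,…,X_r) = −∏_{i=1}^r X_i + Σ_{u=1}^{r} Σ_{i=1}^{r} a_u^{q^{i-1}} X_i^u + T(a_0) is irreducible in F̄_q[X_1,…,X_r]; that is, the variety V_{r,r} is absolutely irreducible. -/

import Mathlib

open MvPolynomial

/-!
Write `V = -∏ X_i + ∑ b_{u,i} X_i ^ u + c`. Substituting `0` for the first variable kills the
product and leaves a polynomial `W` of the same degree `n` in the other variables. A substitution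
that does not raise degrees reflects irreducibility as soon as it preserves the degree of the
polynomial at hand, so it is enough to show that `W` is irreducible. For this it suffices that its
top-degree form `∑ b_{n,i} X_i ^ n`, which still has at least three variables, is irreducible.
That form is `b X_0 ^ n + g` with `g` a diagonal form in at least two variables; `g` is squarefree
because `∂g/∂X_i = n b_i X_i ^ (n - 1)` and the `X_i` have no common factor, so Eisenstein's
criterion applies at any prime factor of `g`.
-/

section Eisenstein

theorem irreducible_C_mul_X_pow_add_C {R : Type*} [CommRing R] [IsDomain R] {π a b : R}
    {n : ℕ} (hn : n ≠ 0) (hπ : Prime π) (hb : IsUnit b) (ha : π ∣ a) (ha' : ¬π ^ 2 ∣ a) :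
    Irreducible (Polynomial.C b * Polynomial.X ^ n + Polynomial.C a) := by
  set f := Polynomial.C b * Polynomial.X ^ n + Polynomial.C a with hf
  have coeff_f (j : ℕ) : f.coeff j = (if j = n then b else 0) + if j = 0 then a else 0 := by
    rw [hf, Polynomial.coeff_add, Polynomial.coeff_C_mul_X_pow, Polynomial.coeff_C]
  have natDegree_f : f.natDegree = n := by
    rw [hf, Polynomial.natDegree_add_C, Polynomial.natDegree_C_mul_X_pow n b hb.ne_zero]
  have leadingCoeff_f : f.leadingCoeff = b := by
    simp [Polynomial.leadingCoeff, natDegree_f, coeff_f, hn]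
  have hP : (Ideal.span {π}).IsPrime := (Ideal.span_singleton_prime hπ.ne_zero).2 hπ
  have eisenstein : f.IsEisensteinAt (Ideal.span {π}) :=
    { leading := by
        rw [leadingCoeff_f, Ideal.mem_span_singleton]
        exact fun h => hπ.not_isUnit (isUnit_of_dvd_unit h hb)
      mem := fun {j} hj => by
        rw [natDegree_f] at hj
        rw [Ideal.mem_span_singleton, coeff_f, if_neg hj.ne, zero_add]
        split_ifs
        exacts [ha, dvd_zero π]
      notMem := by
        rwa [Ideal.span_singleton_pow, Ideal.mem_span_singleton, coeff_f, if_neg hn.symm, zero_add,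
          if_pos rfl] }
  refine eisenstein.irreducible hP (fun x hx => ?_) (natDegree_f ▸ hn.pos)
  exact isUnit_of_dvd_unit (leadingCoeff_f ▸ (Polynomial.C_dvd_iff_dvd_coeff x f).1 hx _) hb

theorem irreducible_C_mul_X_pow_add_C_of_squarefree {R : Type*} [CommRing R] [IsDomain R]
    [UniqueFactorizationMonoid R] {a b : R} {n : ℕ} (hn : n ≠ 0) (hb : IsUnit b)
    (ha : Squarefree a) (ha' : ¬IsUnit a) :
    Irreducible (Polynomial.C b * Polynomial.X ^ n + Polynomial.C a) := by
  obtain ⟨π, hπ, hπa⟩ := WfDvdMonoid.exists_irreducible_factor ha' ha.ne_zero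
  exact irreducible_C_mul_X_pow_add_C hn hπ.prime hb hπa
    fun h => hπ.not_isUnit (ha π (sq π ▸ h))

end Eisenstein

section Diagonal

variable {σ K : Type*} [Field K]

theorem dvd_derivation_of_mul_self_dvd {R A : Type*} [CommSemiring R] [CommSemiring A] [Algebra R A]
    (D : Derivation R A A) {a b : A} (h : a * a ∣ b) : a ∣ D b := by
  obtain ⟨c, rfl⟩ := h
  rw [D.leibniz, D.leibniz, smul_eq_mul, smul_eq_mul, smul_eq_mul]
  exact dvd_add ((dvd_mul_right a a).mul_right _)
    ((dvd_add (dvd_mul_right a _) (dvd_mul_right a _)).mul_left c)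

theorem pderiv_sum_C_mul_X_pow {R : Type*} [CommSemiring R] [Fintype σ] (b : σ → R) (n : ℕ)
    (i : σ) :
    pderiv i (∑ j, C (b j) * X j ^ n) = C (n * b i) * X i ^ (n - 1) := by
  rw [map_sum, Finset.sum_eq_single i]
  · rw [pderiv_C_mul, pderiv_pow, pderiv_X_self, C_mul, map_natCast]
    ring
  · intro j _ hj
    rw [pderiv_C_mul, pderiv_pow, pderiv_X_of_ne hj, mul_zero, mul_zero]
  · simp

theorem squarefree_sum_C_mul_X_pow [Fintype σ] [Nontrivial σ] {b : σ → K} (hb : ∀ i, b i ≠ 0)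
    {n : ℕ} (hn : (n : K) ≠ 0) :
    Squarefree (∑ i, C (b i) * X i ^ n : MvPolynomial σ K) := by
  obtain ⟨i, j, hij⟩ := exists_pair_ne σ
  have pderiv_ne_zero : pderiv i (∑ i, C (b i) * X i ^ n) ≠ 0 := by
    rw [pderiv_sum_C_mul_X_pow]
    exact mul_ne_zero (C_ne_zero.2 (mul_ne_zero hn (hb i))) (pow_ne_zero _ (X_ne_zero i))
  rw [squarefree_iff_irreducible_sq_not_dvd_of_ne_zero (by rintro h; simp [h] at pderiv_ne_zero)]
  intro π hπ hdvd
  have dvd_X (l : σ) : π ∣ X l := by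
    have h := dvd_derivation_of_mul_self_dvd (pderiv l) hdvd
    rw [pderiv_sum_C_mul_X_pow] at h
    have hunit : IsUnit (C (n * b l) : MvPolynomial σ K) := (mul_ne_zero hn (hb l)).isUnit.map C
    exact hπ.prime.dvd_of_dvd_pow (hunit.dvd_mul_left.1 h)
  have : (X i : MvPolynomial σ K) ∣ X j :=
    ((X_prime.irreducible.dvd_comm hπ).2 (dvd_X i)).trans (dvd_X j)
  exact hij (X_dvd_X.1 this)

theorem irreducible_sum_C_mul_X_pow {r : ℕ} (hr : 3 ≤ r) {b : Fin r → K} (hb : ∀ i, b i ≠ 0)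
    {n : ℕ} (hn : (n : K) ≠ 0) :
    Irreducible (∑ i, C (b i) * X i ^ n : MvPolynomial (Fin r) K) := by
  obtain ⟨s, rfl⟩ : ∃ s, r = s + 1 := ⟨r - 1, by omega⟩
  have : Nontrivial (Fin s) := Fin.nontrivial_iff_two_le.2 (by omega)
  have hn0 : n ≠ 0 := by rintro rfl; simp at hn
  have squarefree_tail := squarefree_sum_C_mul_X_pow (fun i : Fin s => hb i.succ) hn
  have not_isUnit_tail : ¬IsUnit (∑ i : Fin s, C (b i.succ) * X i ^ n) := fun h => by
    simpa [hn0] using h.map constantCoeff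
  have finSuccEquiv_C (x : K) : finSuccEquiv K s (C x) = Polynomial.C (C x) :=
    (finSuccEquiv K s).commutes x
  have finSuccEquiv_sum : finSuccEquiv K s (∑ i, C (b i) * X i ^ n) =
      Polynomial.C (C (b 0)) * Polynomial.X ^ n +
        Polynomial.C (∑ i : Fin s, C (b i.succ) * X i ^ n) := by
    simp [Fin.sum_univ_succ, finSuccEquiv_C, finSuccEquiv_X_zero, finSuccEquiv_X_succ]
  rw [← MulEquiv.irreducible_iff (finSuccEquiv K s), finSuccEquiv_sum]
  exact irreducible_C_mul_X_pow_add_C_of_squarefree hn0 ((hb 0).isUnit.map C) squarefree_tail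
    not_isUnit_tail

end Diagonal

section Degree

variable {σ τ R S : Type*}

theorem homogeneousComponent_mul_of_totalDegree_le [CommSemiring R] {f g : MvPolynomial σ R}
    {m n : ℕ} (hf : f.totalDegree ≤ m) (hg : g.totalDegree ≤ n) :
    homogeneousComponent (m + n) (f * g) = homogeneousComponent m f * homogeneousComponent n g := by
  classical
  ext d
  by_cases hd : d.degree = m + n
  · rw [coeff_homogeneousComponent, if_pos hd, coeff_mul, coeff_mul]
    refine Finset.sum_congr rfl fun ⟨d₁, d₂⟩ h => ?_
    have hdeg : d₁.degree + d₂.degree = m + n := by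
      rw [← map_add, Finset.HasAntidiagonal.mem_antidiagonal.1 h, hd]
    simp only [coeff_homogeneousComponent]
    rcases lt_trichotomy d₁.degree m with hlt | heq | hgt
    · have hd₂ : n < d₂.degree := by omega
      rw [coeff_eq_zero_of_totalDegree_lt (hg.trans_lt hd₂), if_neg hlt.ne, mul_zero, zero_mul]
    · have hd₂ : d₂.degree = n := by omega
      rw [if_pos heq, if_pos hd₂]
    · rw [coeff_eq_zero_of_totalDegree_lt (hf.trans_lt hgt), if_neg hgt.ne', zero_mul, zero_mul]
  · rw [coeff_homogeneousComponent, if_neg hd]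
    exact (((homogeneousComponent_isHomogeneous m f).mul
      (homogeneousComponent_isHomogeneous n g)).coeff_eq_zero hd).symm

theorem totalDegree_eq_of_homogeneousComponent_ne_zero [CommSemiring R] {f : MvPolynomial σ R}
    {n : ℕ} (hf : f.totalDegree ≤ n) (h : homogeneousComponent n f ≠ 0) : f.totalDegree = n :=
  hf.antisymm (not_lt.1 fun hlt => h (homogeneousComponent_eq_zero n f hlt))

theorem isUnit_homogeneousComponent_totalDegree_iff [CommRing R] [IsReduced R]
    {f : MvPolynomial σ R} : IsUnit (homogeneousComponent f.totalDegree f) ↔ IsUnit f := by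
  nontriviality MvPolynomial σ R
  suffices f.totalDegree = 0 → homogeneousComponent f.totalDegree f = f by
    refine ⟨fun h => ?_, fun h => ?_⟩
    · have hdeg := (homogeneousComponent_isHomogeneous f.totalDegree f).totalDegree h.ne_zero
      rwa [this (hdeg.symm.trans (isUnit_iff_totalDegree_of_isReduced.1 h).2)] at h
    · rwa [this (isUnit_iff_totalDegree_of_isReduced.1 h).2]
  intro h
  rw [h, homogeneousComponent_zero, ← totalDegree_eq_zero_iff_eq_C.1 h]

theorem irreducible_of_irreducible_homogeneousComponent [CommRing R] [IsDomain R]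
    {f : MvPolynomial σ R} {n : ℕ} (hf : f.totalDegree ≤ n)
    (h : Irreducible (homogeneousComponent n f)) : Irreducible f := by
  obtain rfl := totalDegree_eq_of_homogeneousComponent_ne_zero hf h.ne_zero
  refine ⟨mt isUnit_homogeneousComponent_totalDegree_iff.2 h.not_isUnit, ?_⟩
  rintro g₁ g₂ rfl
  have hne : g₁ * g₂ ≠ 0 := fun h0 => h.ne_zero (by rw [h0, map_zero])
  have hdeg := totalDegree_mul_of_isDomain (left_ne_zero_of_mul hne) (right_ne_zero_of_mul hne)
  rw [hdeg, homogeneousComponent_mul_of_totalDegree_le le_rfl le_rfl] at h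
  exact (h.isUnit_or_isUnit rfl).imp isUnit_homogeneousComponent_totalDegree_iff.1
    isUnit_homogeneousComponent_totalDegree_iff.1

theorem totalDegree_aeval_le [CommSemiring R] [CommSemiring S] [Algebra R S]
    {g : σ → MvPolynomial τ S} (hg : ∀ i, (g i).totalDegree ≤ 1) (f : MvPolynomial σ R) :
    (aeval g f).totalDegree ≤ f.totalDegree := by
  rw [aeval_def, eval₂_eq]
  refine totalDegree_finsetSum_le fun d hd => ?_
  calc (algebraMap R (MvPolynomial τ S) (f.coeff d) * ∏ i ∈ d.support, g i ^ d i).totalDegree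
      ≤ (∏ i ∈ d.support, g i ^ d i).totalDegree := by
        rw [← Algebra.smul_def]
        exact totalDegree_smul_le _ _
    _ ≤ ∑ i ∈ d.support, (g i ^ d i).totalDegree := totalDegree_finsetProd _ _
    _ ≤ ∑ i ∈ d.support, d i := Finset.sum_le_sum fun i _ =>
        (totalDegree_pow (g i) (d i)).trans (mul_le_of_le_one_right' (hg i))
    _ ≤ f.totalDegree := le_totalDegree hd

theorem irreducible_of_irreducible_map_of_totalDegree_le {K : Type*} [Field K] [CommRing S]
    [IsDomain S] {φ : MvPolynomial σ K →+* MvPolynomial τ S}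
    (hφ : ∀ g, (φ g).totalDegree ≤ g.totalDegree) {f : MvPolynomial σ K}
    (hf : f.totalDegree ≤ (φ f).totalDegree) (h : Irreducible (φ f)) : Irreducible f := by
  refine ⟨fun hu => h.not_isUnit (hu.map φ), ?_⟩
  rintro g₁ g₂ rfl
  rw [map_mul] at h hf
  have hφ₁ : φ g₁ ≠ 0 := left_ne_zero_of_mul h.ne_zero
  have hφ₂ : φ g₂ ≠ 0 := right_ne_zero_of_mul h.ne_zero
  have hg₁ : g₁ ≠ 0 := fun h0 => hφ₁ (by rw [h0, map_zero])
  have hg₂ : g₂ ≠ 0 := fun h0 => hφ₂ (by rw [h0, map_zero])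
  rw [totalDegree_mul_of_isDomain hg₁ hg₂, totalDegree_mul_of_isDomain hφ₁ hφ₂] at hf
  have h₁ := hφ g₁
  have h₂ := hφ g₂
  have isUnit_of_map {g : MvPolynomial σ K} (hg : g ≠ 0) (hdeg : g.totalDegree ≤ (φ g).totalDegree)
      (hu : IsUnit (φ g)) : IsUnit g := by
    have := (isUnit_iff_totalDegree_of_isReduced.1 hu).2
    have hC := totalDegree_eq_zero_iff_eq_C.1 (Nat.le_zero.1 (this ▸ hdeg))
    rw [hC] at hg ⊢
    exact (C_ne_zero.1 hg).isUnit.map C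
  exact (h.isUnit_or_isUnit rfl).imp (isUnit_of_map hg₁ (by omega)) (isUnit_of_map hg₂ (by omega))

end Degree

section DiagonalPolynomial

variable {σ A K : Type*} [CommSemiring A] [Field K]

/-- The sum `∑ᵢ fᵢ(Xᵢ)` of univariate polynomials of degree at most `n` in separate variables, where
`fᵢ` has coefficient `b u i` in degree `u ≥ 1` and the constant terms are collected into `c`. -/
noncomputable def diagonalPolynomial [Fintype σ] (n : ℕ) (b : ℕ → σ → A) (c : A) :
    MvPolynomial σ A :=
  (∑ u ∈ Finset.Icc 1 n, ∑ i, C (b u i) * X i ^ u) + C c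

theorem totalDegree_diagonalPolynomial_le [Fintype σ] (n : ℕ) (b : ℕ → σ → A) (c : A) :
    (diagonalPolynomial n b c).totalDegree ≤ n := by
  refine (totalDegree_add _ _).trans (max_le ?_ (by rw [totalDegree_C]; exact n.zero_le))
  exact totalDegree_finsetSum_le fun u hu => totalDegree_finsetSum_le fun i _ =>
    (isHomogeneous_C_mul_X_pow (b u i) i u).totalDegree_le.trans (Finset.mem_Icc.1 hu).2

theorem homogeneousComponent_diagonalPolynomial [Fintype σ] {n : ℕ} (hn : n ≠ 0) (b : ℕ → σ → A)
    (c : A) : homogeneousComponent n (diagonalPolynomial n b c) = ∑ i, C (b n i) * X i ^ n := by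
  have isHomogeneous_term (u : ℕ) : (∑ i, C (b u i) * X i ^ u).IsHomogeneous u :=
    .sum _ _ _ fun i _ => isHomogeneous_C_mul_X_pow (b u i) i u
  rw [diagonalPolynomial, map_add, map_sum, homogeneousComponent_of_mem (isHomogeneous_C σ c),
    if_neg hn, add_zero,
    Finset.sum_congr rfl fun u _ => homogeneousComponent_of_mem (isHomogeneous_term u)]
  simp [Nat.one_le_iff_ne_zero, hn]

theorem aeval_cons_zero_X_diagonalPolynomial {s : ℕ} (n : ℕ) (b : ℕ → Fin (s + 1) → A) (c : A) :
    aeval (Fin.cons 0 X : Fin (s + 1) → MvPolynomial (Fin s) A) (diagonalPolynomial n b c) =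
      diagonalPolynomial n (fun u i => b u i.succ) c := by
  simp only [diagonalPolynomial, map_add, map_sum, map_mul, map_pow, aeval_X, aeval_C,
    algebraMap_eq, Fin.sum_univ_succ, Fin.cons_zero, Fin.cons_succ]
  congr 1
  refine Finset.sum_congr rfl fun u hu => ?_
  rw [zero_pow (Nat.one_le_iff_ne_zero.1 (Finset.mem_Icc.1 hu).1), mul_zero, zero_add]

theorem irreducible_diagonalPolynomial {r : ℕ} (hr : 3 ≤ r) {n : ℕ} (hn : (n : K) ≠ 0)
    {b : ℕ → Fin r → K} (hb : ∀ i, b n i ≠ 0) (c : K) :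
    Irreducible (diagonalPolynomial n b c) := by
  have hn0 : n ≠ 0 := by rintro rfl; exact hn Nat.cast_zero
  refine irreducible_of_irreducible_homogeneousComponent
    (totalDegree_diagonalPolynomial_le n b c) ?_
  rw [homogeneousComponent_diagonalPolynomial hn0]
  exact irreducible_sum_C_mul_X_pow hr hb hn

theorem totalDegree_diagonalPolynomial [Fintype σ] {n : ℕ} {b : ℕ → σ → A} {i : σ}
    (hb : b n i ≠ 0) (c : A) : (diagonalPolynomial n b c).totalDegree = n := by
  rcases eq_or_ne n 0 with rfl | hn
  · exact Nat.le_zero.1 (totalDegree_diagonalPolynomial_le 0 b c)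
  classical
  refine totalDegree_eq_of_homogeneousComponent_ne_zero (totalDegree_diagonalPolynomial_le n b c) ?_
  rw [homogeneousComponent_diagonalPolynomial hn]
  refine ne_of_apply_ne (coeff (Finsupp.single i n)) ?_
  simpa [coeff_sum, coeff_C_mul, coeff_X_pow, Finsupp.single_left_inj hn] using hb

end DiagonalPolynomial

theorem stmt_5_general {K : Type*} [Field K] {n r : ℕ} (hr : 4 ≤ r) (hrn : r ≤ n)
    (hn : (n : K) ≠ 0) {b : ℕ → Fin r → K} (hb : ∀ i, b n i ≠ 0) (c : K) :
    Irreducible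
      (-(∏ i : Fin r, X i) +
        (∑ u ∈ Finset.Icc 1 n, ∑ i : Fin r, C (b u i) * X i ^ u) +
        C c : MvPolynomial (Fin r) K) := by
  obtain ⟨s, rfl⟩ : ∃ s, r = s + 1 := ⟨r - 1, by omega⟩
  rw [add_assoc]
  change Irreducible (-(∏ i, X i) + diagonalPolynomial n b c)
  have totalDegree_le : (-(∏ i, X i) + diagonalPolynomial n b c).totalDegree ≤ n := by
    refine (totalDegree_add _ _).trans (max_le ?_ (totalDegree_diagonalPolynomial_le n b c))
    rw [totalDegree_neg]
    exact (totalDegree_finsetProd _ _).trans (by simpa using hrn)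
  let φ : MvPolynomial (Fin (s + 1)) K →ₐ[K] MvPolynomial (Fin s) K := aeval (Fin.cons 0 X)
  have totalDegree_φ_le : ∀ g, (φ g).totalDegree ≤ g.totalDegree :=
    totalDegree_aeval_le (Fin.cases (by simp) (by simp))
  have φ_eq : φ (-(∏ i, X i) + diagonalPolynomial n b c) =
      diagonalPolynomial n (fun u i => b u i.succ) c := by
    rw [map_add, aeval_cons_zero_X_diagonalPolynomial, map_neg, map_prod, Fin.prod_univ_succ,
      aeval_X, Fin.cons_zero, zero_mul, neg_zero, zero_add]
  refine irreducible_of_irreducible_map_of_totalDegree_le (φ := φ.toRingHom) totalDegree_φ_le ?_ ?_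
  all_goals rw [AlgHom.toRingHom_eq_coe, RingHom.coe_coe, φ_eq]
  · have hs : 0 < s := by omega
    rwa [totalDegree_diagonalPolynomial (b := fun u (i : Fin s) => b u i.succ) (i := ⟨0, hs⟩)
      (hb _)]
  · exact irreducible_diagonalPolynomial (by omega) hn (fun i => hb i.succ) c

/-- For `k = r ≥ 4` and `p ∤ r`, the polynomial
`V_{r,r} = -∏ X_i + ∑_{u=1}^r ∑_{i=1}^r a_u^{q^{i-1}} X_i^u + T(a_0)`
with coefficients `a_u ∈ F_{q^r}` and `a_r ≠ 0` is absolutely irreducible. -/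
theorem stmt_5 (p m q r : ℕ) (hp : p.Prime) (hm : 0 < m) (hq : q = p ^ m)
    (hr : 4 ≤ r) (hpr : ¬ p ∣ r)
    (K : Type) [Field K] [IsAlgClosed K] [CharP K p]
    (a : ℕ → K) (hmem : ∀ u ≤ r, a u ^ q ^ r = a u) (har : a r ≠ 0) :
    Irreducible
      (-(∏ i : Fin r, X i) +
        (∑ u ∈ Finset.Icc 1 r, ∑ i : Fin r, C (a u ^ q ^ (i : ℕ)) * X i ^ u) +
        C (∑ i ∈ Finset.range r, a 0 ^ q ^ i) : MvPolynomial (Fin r) K) := by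
  exact stmt_5_general hr le_rfl (by rwa [Ne, CharP.cast_eq_zero_iff K p])
    (fun i => pow_ne_zero (q ^ (i : ℕ)) har) _
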